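/- arXiv:1812.09093 — 8 statements merged into one kernel-verified Lean document; each statement's English description precedes it below -/
import Mathlib

section
/- Let p, K ∈ ℕ with K ≥ 1. Let s : ℝ^p → ℝ be continuously differentiable with entropy variables w(v) := ∇s(v), let f : ℝ^p → ℝ^p and f^s : ℝ^p → ℝ be given, and define the entropy potentials φ(v) := w(v)·v − s(v) and ψ(v) := w(v)·f(v) − f^s(v). Suppose u_k : ℝ → ℝ^p and J_k : ℝ → ℝ (k = 1,…,K) are differentiable, ν*_{k+1/2} : ℝ → ℝ and g*_{k+1/2} : ℝ → ℝ^p (k = 0,…,K, with indices ½,…,K+½) are given, and for all t and all k = 1,…,K the semi-discrete moving mesh finite volume scheme holds: d/dt J_k = ν*_{k+1/2} − ν*_{k−1/2} and d/dt (J_k u_k) = −(g*_{k+1/2} − g*_{k−1/2}). Assume the moving mesh entropy condition at every interior interface: (w(u_{k+1}) − w(u_k))ᵀ g*_{k+1/2} = (ψ(u_{k+1}) − ψ(u_k)) − ν*_{k+1/2}(φ(u_{k+1}) − φ(u_k)) for k = 1,…,K−1. Then for all t: d/dt ∑_{k=1}^{K} J_k s(u_k) = −( w(u_K)ᵀ g*_{K+1/2}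 − ψ(u_K) + ν*_{K+1/2} φ(u_K) ) + ( w(u_1)ᵀ g*_{1/2} − ψ(u_1) + ν*_{1/2} φ(u_1) ). -/
/-!
Writing `u' = du/dt`, the chain rule gives `(J s(u))' = J' s(u) + J ⟪w(u), u'⟫`, and the conservation
law `(J u)' = J' u + J u'` eliminates `J u'`. With the geometric conservation law for `J'`, cell `k`
produces entropy at the rate `-⟪w_k, g_{k+1/2} - g_{k-1/2}⟫ - φ_k (ν_{k+1/2} - ν_{k-1/2})`
(`hasDerivAt_cell_entropy`). Adding and subtracting `ψ_k` turns this into (left-hand flux) -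
(right-hand flux), and the entropy condition says precisely that the right-hand flux of a cell is
the left-hand flux of the next one, so the sum over the cells telescopes (`sum_sub_eq_of_interface`).
-/

open scoped RealInnerProductSpace

/-- Entropy production in a single cell, where `ν = dJ/dt` and `-g = d(J u)/dt`. -/
lemma hasDerivAt_cell_entropy {E : Type*} [NormedAddCommGroup E] [InnerProductSpace ℝ E]
    [CompleteSpace E] {s : E → ℝ} {u : ℝ → E} {J : ℝ → ℝ} {t ν : ℝ} {g : E}
    (hs : DifferentiableAt ℝ s (u t)) (hu : DifferentiableAt ℝ u t)
    (hJ : HasDerivAt J ν t) (hJu : HasDerivAt (fun τ => J τ • u τ) (-g) t) :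
    HasDerivAt (fun τ => J τ * s (u τ))
      (-⟪gradient s (u t), g⟫ - ν * (⟪gradient s (u t), u t⟫ - s (u t))) t := by
  have hsu : HasDerivAt (fun τ => s (u τ)) ⟪gradient s (u t), deriv u t⟫ t := by
    refine (hs.hasFDerivAt.comp_hasDerivAt t hu.hasDerivAt).congr_deriv ?_
    simp
  have hg : J t • deriv u t + ν • u t = -g := (hJ.smul hu.hasDerivAt).unique hJu
  have hwg := congrArg (fun x => ⟪gradient s (u t), x⟫) hg
  simp only [inner_add_right, inner_smul_right, inner_neg_right] at hwg
  refine (hJ.mul hsu).congr_deriv ?_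
  linarith

/-- Telescoping over cells, with left-hand fluxes `b` and right-hand fluxes `a` that agree at
every interior interface. -/
lemma sum_sub_eq_of_interface {n : ℕ} (a b : Fin (n + 1) → ℝ)
    (h : ∀ i : Fin n, a i.castSucc = b i.succ) :
    ∑ k, (b k - a k) = -a (Fin.last n) + b 0 := by
  rw [Finset.sum_sub_distrib, Fin.sum_univ_succ b, Fin.sum_univ_castSucc a,
    Finset.sum_congr rfl fun i _ => h i]
  ring

/-- Theorem 2.1: semi-discrete entropy conservation for the moving mesh
finite volume scheme. -/
theorem fv_moving_mesh_entropy_conservation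
    (p K : ℕ) (hK : 1 ≤ K)
    (s : EuclideanSpace ℝ (Fin p) → ℝ) (hs : ContDiff ℝ 1 s)
    (f : EuclideanSpace ℝ (Fin p) → EuclideanSpace ℝ (Fin p))
    (fs : EuclideanSpace ℝ (Fin p) → ℝ)
    (w : EuclideanSpace ℝ (Fin p) → EuclideanSpace ℝ (Fin p))
    (hw : ∀ v, w v = gradient s v)
    (φ ψ : EuclideanSpace ℝ (Fin p) → ℝ)
    (hφ : ∀ v, φ v = ⟪w v, v⟫ - s v)
    (hψ : ∀ v, ψ v = ⟪w v, f v⟫ - fs v)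
    (u : Fin K → ℝ → EuclideanSpace ℝ (Fin p))
    (J : Fin K → ℝ → ℝ)
    (hu : ∀ k, Differentiable ℝ (u k))
    (hJ : ∀ k, Differentiable ℝ (J k))
    (νs : Fin (K + 1) → ℝ → ℝ)
    (gs : Fin (K + 1) → ℝ → EuclideanSpace ℝ (Fin p))
    (hGCL : ∀ (t : ℝ) (k : Fin K),
      HasDerivAt (J k) (νs k.succ t - νs k.castSucc t) t)
    (hCL : ∀ (t : ℝ) (k : Fin K),
      HasDerivAt (fun τ => J k τ • u k τ) (-(gs k.succ t - gs k.castSucc t)) t)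
    (hEC : ∀ (t : ℝ) (k : ℕ) (h1 : k + 1 < K),
      ⟪w (u ⟨k + 1, h1⟩ t) - w (u ⟨k, Nat.lt_of_succ_lt h1⟩ t),
          gs ⟨k + 1, Nat.lt_succ_of_lt h1⟩ t⟫
        = (ψ (u ⟨k + 1, h1⟩ t) - ψ (u ⟨k, Nat.lt_of_succ_lt h1⟩ t))
          - νs ⟨k + 1, Nat.lt_succ_of_lt h1⟩ t
            * (φ (u ⟨k + 1, h1⟩ t) - φ (u ⟨k, Nat.lt_of_succ_lt h1⟩ t))) :
    ∀ t : ℝ,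
      HasDerivAt (fun τ => ∑ k : Fin K, J k τ * s (u k τ))
        (-(⟪w (u ⟨K - 1, by omega⟩ t), gs (Fin.last K) t⟫
              - ψ (u ⟨K - 1, by omega⟩ t)
              + νs (Fin.last K) t * φ (u ⟨K - 1, by omega⟩ t))
          + (⟪w (u ⟨0, by omega⟩ t), gs 0 t⟫
              - ψ (u ⟨0, by omega⟩ t)
              + νs 0 t * φ (u ⟨0, by omega⟩ t))) t := by
  intro t
  obtain ⟨n, rfl⟩ : ∃ n, K = n + 1 := ⟨K - 1, by omega⟩
  have hcell (k : Fin (n + 1)) := hasDerivAt_cell_entropy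
    (hs.differentiable one_ne_zero (u k t)) (hu k t) (hGCL t k) (hCL t k)
  -- Entropy fluxes through the right and left interfaces, evaluated with the state of cell `k`.
  let a (k : Fin (n + 1)) : ℝ :=
    ⟪w (u k t), gs k.succ t⟫ - ψ (u k t) + νs k.succ t * φ (u k t)
  let b (k : Fin (n + 1)) : ℝ :=
    ⟪w (u k t), gs k.castSucc t⟫ - ψ (u k t) + νs k.castSucc t * φ (u k t)
  have hab (i : Fin n) : a i.castSucc = b i.succ := by
    have h : ⟪w (u i.succ t) - w (u i.castSucc t), gs i.succ.castSucc t⟫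
        = (ψ (u i.succ t) - ψ (u i.castSucc t))
          - νs i.succ.castSucc t * (φ (u i.succ t) - φ (u i.castSucc t)) :=
      hEC t i (Nat.succ_lt_succ i.isLt)
    rw [inner_sub_left] at h
    simp only [a, b, Fin.succ_castSucc]
    linarith
  have hsum : HasDerivAt (fun τ => ∑ k, J k τ * s (u k τ)) (∑ k, (b k - a k)) t := by
    refine HasDerivAt.fun_sum fun k _ => (hcell k).congr_deriv ?_
    simp only [a, b, hφ, hw, inner_sub_right]
    ring
  rw [sum_sub_eq_of_interface a b hab] at hsum
  exact hsum
end

section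
/- Let p, K, s ∈ ℕ with K ≥ 1, let c ∈ ℝ^p, and let a_{τσ}, b_σ (τ, σ = 1,…,s) be real Runge–Kutta coefficients. Index the cells periodically by k ∈ ℤ/K. Let g* : ℝ × ℝ × ℝ^p × ℝ^p → ℝ^p be a numerical flux satisfying the consistency condition g*(ν^L, ν^R, v, v) = f(v) − ½(ν^L + ν^R) v for all ν^L, ν^R ∈ ℝ, v ∈ ℝ^p, where f : ℝ^p → ℝ^p is the physical flux. Given J_k^n ∈ ℝ, grid velocities ν^{L}_{k+1/2,σ}, ν^{R}_{k+1/2,σ} ∈ ℝ, set ν*_{k+1/2,σ} := ½(ν^{L}_{k+1/2,σ} + ν^{R}_{k+1/2,σ}), and define the Runge–Kutta stages for τ = 1,…,s by J_k^{(τ)} := J_k^n + Δt ∑_{σ=1}^{τ−1} a_{τσ}(ν*_{k+1/2,σ} − ν*_{k−1/2,σ}) and u_k^{(τ)} := u_k^n − (Δt / J_k^{(τ)}) ∑_{σ=1}^{τ−1} a_{τσ}[(g*_{k+1/2,σ} + ν*_{k+1/2,σ} u_k^{(σ)}) − (g*_{k−1/2,σ} + ν*_{k−1/2,σ} u_k^{(σ)})],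 where g*_{k+1/2,σ} := g*(ν^{L}_{k+1/2,σ}, ν^{R}_{k+1/2,σ}, u_k^{(σ)}, u_{k+1}^{(σ)}); define u_k^{n+1} analogously with coefficients b_σ and J_k^{n+1} := J_k^n + Δt ∑_{σ=1}^{s} b_σ(ν*_{k+1/2,σ} − ν*_{k−1/2,σ}). Assume J_k^{(τ)} ≠ 0 and J_k^{n+1} ≠ 0 for all k, τ, and assume u_k^n = c for all k. Then u_k^{(τ)} = c for all k and all τ = 1,…,s, and u_k^{n+1} = c for all k. -/
/-!
If a stage is constant in space, equal to `c`, then consistency of the numerical flux gives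
`g*_{k+1/2} + ν*_{k+1/2} c = f c` at every interface, whatever the grid velocities are. So every
flux difference that enters a later stage or the final update vanishes, and strong induction on
the stage index propagates the value `c`.
-/

/-- Theorem 2.3: free stream preservation for the fully discrete moving
mesh Runge–Kutta finite volume scheme with periodically indexed cells. -/
theorem rk_fv_free_stream_preservation
    (p K s : ℕ) (hK : 1 ≤ K) (c : Fin p → ℝ)
    (a : ℕ → ℕ → ℝ) (b : ℕ → ℝ) (Δt : ℝ)
    (f : (Fin p → ℝ) → (Fin p → ℝ))
    (gstar : ℝ → ℝ → (Fin p → ℝ) → (Fin p → ℝ) → (Fin p → ℝ))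
    (hcons : ∀ (νL νR : ℝ) (v : Fin p → ℝ),
      gstar νL νR v v = f v - ((νL + νR) / 2) • v)
    (Jn Jn1 : ZMod K → ℝ) (Jst : ℕ → ZMod K → ℝ)
    (un un1 : ZMod K → (Fin p → ℝ)) (ust : ℕ → ZMod K → (Fin p → ℝ))
    (νL νR : ZMod K → ℕ → ℝ)
    (νstar : ZMod K → ℕ → ℝ)
    (hν : ∀ k σ, νstar k σ = (νL k σ + νR k σ) / 2)
    (gflux : ZMod K → ℕ → (Fin p → ℝ))
    (hg : ∀ k σ, gflux k σ = gstar (νL k σ) (νR k σ) (ust σ k) (ust σ (k + 1)))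
    (hJst : ∀ τ ∈ Finset.Icc 1 s, ∀ k : ZMod K,
      Jst τ k = Jn k + Δt * ∑ σ ∈ Finset.Ico 1 τ, a τ σ * (νstar k σ - νstar (k - 1) σ))
    (hust : ∀ τ ∈ Finset.Icc 1 s, ∀ k : ZMod K,
      ust τ k = un k - (Δt / Jst τ k) •
        ∑ σ ∈ Finset.Ico 1 τ, a τ σ •
          ((gflux k σ + νstar k σ • ust σ k)
            - (gflux (k - 1) σ + νstar (k - 1) σ • ust σ k)))
    (hJn1 : ∀ k : ZMod K,
      Jn1 k = Jn k + Δt * ∑ σ ∈ Finset.Icc 1 s, b σ * (νstar k σ - νstar (k - 1) σ))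
    (hun1 : ∀ k : ZMod K,
      un1 k = un k - (Δt / Jn1 k) •
        ∑ σ ∈ Finset.Icc 1 s, b σ •
          ((gflux k σ + νstar k σ • ust σ k)
            - (gflux (k - 1) σ + νstar (k - 1) σ • ust σ k)))
    (hJstne : ∀ τ ∈ Finset.Icc 1 s, ∀ k : ZMod K, Jst τ k ≠ 0)
    (hJn1ne : ∀ k : ZMod K, Jn1 k ≠ 0)
    (hinit : ∀ k : ZMod K, un k = c) :
    (∀ τ ∈ Finset.Icc 1 s, ∀ k : ZMod K, ust τ k = c) ∧ (∀ k : ZMod K, un1 k = c) := by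
  have total : ∀ σ, (∀ k, ust σ k = c) → ∀ k, gflux k σ + νstar k σ • c = f c := by
    intro σ h k
    rw [hg, h, h, hcons, hν, sub_add_cancel]
  have diff : ∀ σ, (∀ k, ust σ k = c) → ∀ k,
      (gflux k σ + νstar k σ • ust σ k)
        - (gflux (k - 1) σ + νstar (k - 1) σ • ust σ k) = 0 := by
    intro σ h k
    rw [h k, total σ h, total σ h, sub_self]
  have stages : ∀ τ ∈ Finset.Icc 1 s, ∀ k : ZMod K, ust τ k = c := by
    intro τ
    induction τ using Nat.strong_induction_on with
    | _ τ ih =>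
      intro hτ k
      rw [hust τ hτ k, hinit, Finset.sum_eq_zero, smul_zero, sub_zero]
      intro σ hσ
      rw [Finset.mem_Ico] at hσ
      rw [Finset.mem_Icc] at hτ
      rw [diff σ (ih σ hσ.2 (Finset.mem_Icc.2 ⟨hσ.1, hσ.2.le.trans hτ.2⟩)) k, smul_zero]
  refine ⟨stages, fun k => ?_⟩
  rw [hun1 k, hinit, Finset.sum_eq_zero, smul_zero, sub_zero]
  intro σ hσ
  rw [diff σ (stages σ hσ) k, smul_zero]
end

section
/- Let N ∈ ℕ, let ζ_0 < ζ_1 < … < ζ_N be distinct interpolation nodes in [−1,1] with ζ_0 = −1 and ζ_N = 1, and let I^N denote Lagrange interpolation at these nodes, I^N(g)(ξ) = ∑_{j=0}^N g(ζ_j) ℓ_j(ξ). For l = 1, 2 let Γ_1^l, Γ_2^l, Γ_3^l, Γ_4^l : [−1,1] × [0,T] → ℝ² be faces, each continuously differentiable in t, satisfying the corner compatibility conditions for all t: Γ_4^l(1,t) = Γ_3^l(−1,t), Γ_2^l(1,t) = Γ_3^l(1,t), Γ_4^l(−1,t) = Γ_1^l(−1,t), Γ_2^l(−1,t) = Γ_1^l(1,t).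 Define the 2D transfinite mappings χ^l(ξ¹, ξ², t) := ½[(1−ξ¹) I^N(Γ_4^l)(ξ²,t) + (1+ξ¹) I^N(Γ_2^l)(ξ²,t)] + ½[(1−ξ²) I^N(Γ_1^l)(ξ¹,t) + (1+ξ²) I^N(Γ_3^l)(ξ¹,t)] − ¼(1+ξ¹)[(1−ξ²) I^N(Γ_1^l)(1,t) + (1+ξ²) I^N(Γ_3^l)(1,t)] − ¼(1−ξ¹)[(1−ξ²) I^N(Γ_1^l)(−1,t) + (1+ξ²) I^N(Γ_3^l)(−1,t)]. Assume the two elements share a face: Γ_3^1(ζ_j, t) = Γ_1^2(ζ_j, t) for all j = 0,…,N and all t ∈ [0,T]. Then the grid velocities ν^l := ∂χ^l/∂t are continuous across the shared face: ν^1(ξ, 1, t) = ν^2(ξ, −1, t) for all ξ ∈ [−1,1] and all t ∈ [0,T]. -/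
/-!
Lagrange interpolation reproduces nodal values, and `±1` are nodes. Hence on an edge `ξ² = ±1`
the corner compatibility conditions make the two transverse-face terms cancel against the corner
corrections, so the transfinite map restricts there to the interpolant of that face alone
(`transfiniteMap_one`, `transfiniteMap_neg_one`). The interpolant of a face depends only on its
nodal values, so the two mappings agree on the shared face at every time in `[0, T]`, and
therefore so do their time derivatives within `[0, T]`.
-/

/-- One-dimensional Lagrange basis polynomial for nodes `ζ`. -/
noncomputable def lagBasis (N : ℕ) (ζ : Fin (N + 1) → ℝ) (j : Fin (N + 1)) (ξ : ℝ) : ℝ :=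
  ∏ i ∈ Finset.univ.erase j, (ξ - ζ i) / (ζ j - ζ i)

/-- Lagrange interpolation operator `I^N` (in the first variable) for a time dependent
curve `g : [-1,1] × [0,T] → ℝ²`. -/
noncomputable def lagInterp (N : ℕ) (ζ : Fin (N + 1) → ℝ)
    (g : ℝ → ℝ → (Fin 2 → ℝ)) (ξ t : ℝ) : Fin 2 → ℝ :=
  ∑ j, lagBasis N ζ j ξ • g (ζ j) t

/-- The two-dimensional time dependent isoparametric transfinite interpolation mapping
built from the four (interpolated) faces `Γ1, Γ2, Γ3, Γ4`. -/
noncomputable def transfiniteMap (N : ℕ) (ζ : Fin (N + 1) → ℝ)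
    (Γ1 Γ2 Γ3 Γ4 : ℝ → ℝ → (Fin 2 → ℝ)) (ξ1 ξ2 t : ℝ) : Fin 2 → ℝ :=
  ((1 - ξ1) / 2) • lagInterp N ζ Γ4 ξ2 t + ((1 + ξ1) / 2) • lagInterp N ζ Γ2 ξ2 t
    + ((1 - ξ2) / 2) • lagInterp N ζ Γ1 ξ1 t + ((1 + ξ2) / 2) • lagInterp N ζ Γ3 ξ1 t
    - ((1 + ξ1) / 4) •
        ((1 - ξ2) • lagInterp N ζ Γ1 1 t + (1 + ξ2) • lagInterp N ζ Γ3 1 t)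
    - ((1 - ξ1) / 4) •
        ((1 - ξ2) • lagInterp N ζ Γ1 (-1) t + (1 + ξ2) • lagInterp N ζ Γ3 (-1) t)

lemma lagBasis_self (N : ℕ) {ζ : Fin (N + 1) → ℝ} (hζ : Function.Injective ζ)
    (j : Fin (N + 1)) : lagBasis N ζ j (ζ j) = 1 := by
  unfold lagBasis
  refine Finset.prod_eq_one fun i hi => div_self ?_
  exact sub_ne_zero.2 fun h => (Finset.ne_of_mem_erase hi) (hζ h).symm

lemma lagBasis_of_ne (N : ℕ) (ζ : Fin (N + 1) → ℝ) {j k : Fin (N + 1)} (h : j ≠ k) :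
    lagBasis N ζ j (ζ k) = 0 := by
  unfold lagBasis
  exact Finset.prod_eq_zero (i := k) (by simp [h.symm]) (by simp)

lemma lagInterp_node (N : ℕ) {ζ : Fin (N + 1) → ℝ} (hζ : Function.Injective ζ)
    (g : ℝ → ℝ → (Fin 2 → ℝ)) (k : Fin (N + 1)) (t : ℝ) :
    lagInterp N ζ g (ζ k) t = g (ζ k) t := by
  unfold lagInterp
  rw [Finset.sum_eq_single k]
  · rw [lagBasis_self N hζ, one_smul]
  · intro j _ hj
    rw [lagBasis_of_ne N ζ hj, zero_smul]
  · simp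

/-- On the edge `ξ² = 1` the mapping is the interpolant of `Γ3`, provided the interpolants of
the transverse faces meet it at the two corners. -/
lemma transfiniteMap_one (N : ℕ) (ζ : Fin (N + 1) → ℝ)
    (Γ1 Γ2 Γ3 Γ4 : ℝ → ℝ → (Fin 2 → ℝ)) (ξ t : ℝ)
    (h43 : lagInterp N ζ Γ4 1 t = lagInterp N ζ Γ3 (-1) t)
    (h23 : lagInterp N ζ Γ2 1 t = lagInterp N ζ Γ3 1 t) :
    transfiniteMap N ζ Γ1 Γ2 Γ3 Γ4 ξ 1 t = lagInterp N ζ Γ3 ξ t := by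
  unfold transfiniteMap
  rw [h43, h23]
  module

/-- On the edge `ξ² = -1` the mapping is the interpolant of `Γ1`, provided the interpolants of
the transverse faces meet it at the two corners. -/
lemma transfiniteMap_neg_one (N : ℕ) (ζ : Fin (N + 1) → ℝ)
    (Γ1 Γ2 Γ3 Γ4 : ℝ → ℝ → (Fin 2 → ℝ)) (ξ t : ℝ)
    (h41 : lagInterp N ζ Γ4 (-1) t = lagInterp N ζ Γ1 (-1) t)
    (h21 : lagInterp N ζ Γ2 (-1) t = lagInterp N ζ Γ1 1 t) :
    transfiniteMap N ζ Γ1 Γ2 Γ3 Γ4 ξ (-1) t = lagInterp N ζ Γ1 ξ t := by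
  unfold transfiniteMap
  rw [h41, h21]
  module


/-- Lemma 3.1, two dimensions: continuity of the grid velocity across a
shared face of two neighboring transfinite-interpolation elements. -/
theorem grid_velocity_continuous_across_shared_face
    (N : ℕ) (T : ℝ) (ζ : Fin (N + 1) → ℝ)
    (hζmono : StrictMono ζ) (hζmem : ∀ j, ζ j ∈ Set.Icc (-1 : ℝ) 1)
    (hζ0 : ζ 0 = -1) (hζN : ζ (Fin.last N) = 1)
    (Γ1 Γ2 Γ3 Γ4 Λ1 Λ2 Λ3 Λ4 : ℝ → ℝ → (Fin 2 → ℝ))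
    (hreg : ∀ Γ ∈ ([Γ1, Γ2, Γ3, Γ4, Λ1, Λ2, Λ3, Λ4] : List (ℝ → ℝ → (Fin 2 → ℝ))),
      ∀ x : ℝ, ContDiffOn ℝ 1 (fun t => Γ x t) (Set.Icc 0 T))
    -- corner compatibility conditions for element 1
    (hΓ43 : ∀ t : ℝ, Γ4 1 t = Γ3 (-1) t) (hΓ23 : ∀ t : ℝ, Γ2 1 t = Γ3 1 t)
    (hΓ41 : ∀ t : ℝ, Γ4 (-1) t = Γ1 (-1) t) (hΓ21 : ∀ t : ℝ, Γ2 (-1) t = Γ1 1 t)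
    -- corner compatibility conditions for element 2
    (hΛ43 : ∀ t : ℝ, Λ4 1 t = Λ3 (-1) t) (hΛ23 : ∀ t : ℝ, Λ2 1 t = Λ3 1 t)
    (hΛ41 : ∀ t : ℝ, Λ4 (-1) t = Λ1 (-1) t) (hΛ21 : ∀ t : ℝ, Λ2 (-1) t = Λ1 1 t)
    -- the two elements share the face  Γ₃¹ = Γ₁²  at the interpolation nodes
    (hshare : ∀ j : Fin (N + 1), ∀ t ∈ Set.Icc (0 : ℝ) T, Γ3 (ζ j) t = Λ1 (ζ j) t) :
    ∀ ξ ∈ Set.Icc (-1 : ℝ) 1, ∀ t ∈ Set.Icc (0 : ℝ) T,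
      derivWithin (fun τ => transfiniteMap N ζ Γ1 Γ2 Γ3 Γ4 ξ 1 τ) (Set.Icc 0 T) t
        = derivWithin (fun τ => transfiniteMap N ζ Λ1 Λ2 Λ3 Λ4 ξ (-1) τ) (Set.Icc 0 T) t := by
  intro ξ _ t ht
  have hp (g : ℝ → ℝ → (Fin 2 → ℝ)) (τ : ℝ) : lagInterp N ζ g 1 τ = g 1 τ := by
    simpa only [hζN] using lagInterp_node N hζmono.injective g (Fin.last N) τ
  have hm (g : ℝ → ℝ → (Fin 2 → ℝ)) (τ : ℝ) : lagInterp N ζ g (-1) τ = g (-1) τ := by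
    simpa only [hζ0] using lagInterp_node N hζmono.injective g 0 τ
  have key : Set.EqOn (fun τ => transfiniteMap N ζ Γ1 Γ2 Γ3 Γ4 ξ 1 τ)
      (fun τ => transfiniteMap N ζ Λ1 Λ2 Λ3 Λ4 ξ (-1) τ) (Set.Icc 0 T) := by
    intro τ hτ
    change transfiniteMap N ζ Γ1 Γ2 Γ3 Γ4 ξ 1 τ = transfiniteMap N ζ Λ1 Λ2 Λ3 Λ4 ξ (-1) τ
    rw [transfiniteMap_one N ζ Γ1 Γ2 Γ3 Γ4 ξ τ (by rw [hp, hm, hΓ43]) (by rw [hp, hp, hΓ23]),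
      transfiniteMap_neg_one N ζ Λ1 Λ2 Λ3 Λ4 ξ τ (by rw [hm, hm, hΛ41])
        (by rw [hm, hp, hΛ21])]
    exact Finset.sum_congr rfl fun j _ => by rw [hshare j τ hτ]
  exact derivWithin_congr key (key ht)
end

section
/- Let p ∈ ℕ. Let s : ℝ^p → ℝ be continuously differentiable with entropy variables w(v) := ∇s(v), and let f : ℝ^p → ℝ^p, f^s : ℝ^p → ℝ be continuously differentiable with w(v)ᵀ Df(v) = ∇f^s(v)ᵀ for all v. Let u : [−1,1] × [0,T] → ℝ^p, J : [−1,1] × [0,T] → ℝ and ν : [−1,1] × [0,T] → ℝ be continuously differentiable and suppose they satisfy the geometric conservation law ∂J/∂t = ∂ν/∂ξ and the transformed conservation law ∂(Ju)/∂t + ∂/∂ξ ( f(u) − ν u ) = 0 on [−1,1] × [0,T]. Then the entropy balance law holds pointwise: ∂/∂t ( J · s(u) ) + ∂/∂ξ ( f^s(u) − ν · s(u) ) = 0 on [−1,1] × [0,T]. -/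
/-! Expanding the conservation law by the product and chain rules, the geometric conservation law
cancels the two terms proportional to `u`, leaving the quasi-linear form
`J uₜ + Df(u) u_ξ - ν u_ξ = 0`. Pairing it with `w(u) = ∇s(u)` and using the compatibility
condition turns it into `J s(u)ₜ + fs(u)_ξ - ν s(u)_ξ = 0`. Expanding the entropy balance, the
remaining terms `(Jₜ - ν_ξ) s(u)` vanish, again by the geometric conservation law. -/

open scoped RealInnerProductSpace

/-- equation (2.13): the continuous entropy balance law on the
reference element for the transformed 1D conservation law. -/
theorem continuous_entropy_balance_reference_element
    (p : ℕ) (T : ℝ)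
    (s : EuclideanSpace ℝ (Fin p) → ℝ) (hs : ContDiff ℝ 1 s)
    (w : EuclideanSpace ℝ (Fin p) → EuclideanSpace ℝ (Fin p))
    (hw : ∀ v, w v = gradient s v)
    (f : EuclideanSpace ℝ (Fin p) → EuclideanSpace ℝ (Fin p)) (hf : ContDiff ℝ 1 f)
    (fs : EuclideanSpace ℝ (Fin p) → ℝ) (hfs : ContDiff ℝ 1 fs)
    (hcompat : ∀ v x, ⟪w v, fderiv ℝ f v x⟫ = fderiv ℝ fs v x)
    (u : ℝ → ℝ → EuclideanSpace ℝ (Fin p)) (J ν : ℝ → ℝ → ℝ)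
    (hu : ContDiff ℝ 1 (fun q : ℝ × ℝ => u q.1 q.2))
    (hJ : ContDiff ℝ 1 (fun q : ℝ × ℝ => J q.1 q.2))
    (hν : ContDiff ℝ 1 (fun q : ℝ × ℝ => ν q.1 q.2))
    -- the geometric conservation law  ∂J/∂t = ∂ν/∂ξ
    (hGCL : ∀ ξ ∈ Set.Icc (-1 : ℝ) 1, ∀ t ∈ Set.Icc (0 : ℝ) T,
      deriv (fun τ => J ξ τ) t = deriv (fun x => ν x t) ξ)
    -- the transformed conservation law  ∂(Ju)/∂t + ∂(f(u) - νu)/∂ξ = 0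
    (hCL : ∀ ξ ∈ Set.Icc (-1 : ℝ) 1, ∀ t ∈ Set.Icc (0 : ℝ) T,
      deriv (fun τ => J ξ τ • u ξ τ) t
        + deriv (fun x => f (u x t) - ν x t • u x t) ξ = 0) :
    ∀ ξ ∈ Set.Icc (-1 : ℝ) 1, ∀ t ∈ Set.Icc (0 : ℝ) T,
      deriv (fun τ => J ξ τ * s (u ξ τ)) t
        + deriv (fun x => fs (u x t) - ν x t * s (u x t)) ξ = 0 := by
  intro ξ hξ t ht
  -- Differentiability in each variable separately, from joint `C¹` regularity.
  have hut : HasDerivAt (fun τ => u ξ τ) (deriv (fun τ => u ξ τ) t) t :=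
    ((hu.comp (contDiff_prodMk_right ξ)).differentiable one_ne_zero t).hasDerivAt
  have hux : HasDerivAt (fun x => u x t) (deriv (fun x => u x t) ξ) ξ :=
    ((hu.comp (contDiff_prodMk_left t)).differentiable one_ne_zero ξ).hasDerivAt
  have hJt : HasDerivAt (fun τ => J ξ τ) (deriv (fun τ => J ξ τ) t) t :=
    ((hJ.comp (contDiff_prodMk_right ξ)).differentiable one_ne_zero t).hasDerivAt
  have hνx : HasDerivAt (fun x => ν x t) (deriv (fun x => ν x t) ξ) ξ :=
    ((hν.comp (contDiff_prodMk_left t)).differentiable one_ne_zero ξ).hasDerivAt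
  have hs' : HasFDerivAt s (fderiv ℝ s (u ξ t)) (u ξ t) :=
    (hs.differentiable one_ne_zero _).hasFDerivAt
  have hf' : HasFDerivAt f (fderiv ℝ f (u ξ t)) (u ξ t) :=
    (hf.differentiable one_ne_zero _).hasFDerivAt
  have hfs' : HasFDerivAt fs (fderiv ℝ fs (u ξ t)) (u ξ t) :=
    (hfs.differentiable one_ne_zero _).hasFDerivAt
  have hw' : ∀ x, fderiv ℝ s (u ξ t) x = ⟪w (u ξ t), x⟫ := fun x => by
    rw [hw, gradient, InnerProductSpace.toDual_symm_apply]
  have hG := hGCL ξ hξ t ht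
  have hC := hCL ξ hξ t ht
  have hflux : HasDerivAt (fun x => f (u x t) - ν x t • u x t) _ ξ :=
    (hf'.comp_hasDerivAt ξ hux).sub (hνx.smul hux)
  have hcons : HasDerivAt (fun τ => J ξ τ • u ξ τ) _ t := hJt.smul hut
  have hent : HasDerivAt (fun τ => J ξ τ * s (u ξ τ)) _ t :=
    hJt.mul (hs'.comp_hasDerivAt t hut)
  have hentflux : HasDerivAt (fun x => fs (u x t) - ν x t * s (u x t)) _ ξ :=
    (hfs'.comp_hasDerivAt ξ hux).sub (hνx.mul (hs'.comp_hasDerivAt ξ hux))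
  rw [hcons.deriv, hflux.deriv] at hC
  rw [hent.deriv, hentflux.deriv]
  have hpair := congrArg (fun z => ⟪w (u ξ t), z⟫) hC
  simp only [inner_add_right, inner_sub_right, inner_smul_right, inner_zero_right,
    hcompat] at hpair
  simp only [hw']
  rw [hG] at hpair ⊢
  linarith
end

section
/- Let N ∈ ℕ and let Q be a real (N+1)×(N+1) matrix (indices 0,…,N) satisfying the SBP property Q + Qᵀ = B, where B = diag(−1,0,…,0,1), and additionally ∑_{j=0}^N Q_{ij} = 0 for every i. Then for all nodal values a, b : {0,…,N} → ℝ: ∑_{i,j=0}^{N} Q_{ij} (a_i − a_j) · ½(b_i + b_j) = ∑_{i,j=0}^{N} Q_{ij} a_i b_j − (a_N b_N − a_0 b_0). -/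
/-!
The SBP property gives, for every two-index array `f`, the boundary formula
`∑ Q i j * f i j + ∑ Q i j * f j i = f N N - f 0 0`. Expanding the product of jump and average
leaves half of `∑ Q i j * (a i * b i + a i * b j - a j * b i - a j * b j)`. The first term vanishes
because the rows of `Q` sum to zero; the boundary formula with `f i j = a i * b i` then evaluates
the last term, and with `f i j = a i * b j` it trades the third for the second.
-/

/-- Summation by parts for an arbitrary two-index array: the part of `Q` that is not
skew-symmetric only sees the two boundary entries of the diagonal of `f`. -/
lemma sbp_boundary_formula
    (N : ℕ) (Q : Matrix (Fin (N + 1)) (Fin (N + 1)) ℝ)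
    (hSBP : Q + Q.transpose = Matrix.of fun i j : Fin (N + 1) =>
      if i = j then
        (if (i : ℕ) = 0 then (-1 : ℝ) else 0) + (if (i : ℕ) = N then 1 else 0)
      else 0)
    (f : Fin (N + 1) → Fin (N + 1) → ℝ) :
    (∑ i, ∑ j, Q i j * f i j) + (∑ i, ∑ j, Q i j * f j i)
      = f (Fin.last N) (Fin.last N) - f 0 0 := by
  have hB : ∀ i j, Q i j + Q j i = if i = j then
      (if i = 0 then (-1 : ℝ) else 0) + (if i = Fin.last N then 1 else 0) else 0 := by
    intro i j
    have h := congrFun (congrFun hSBP i) j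
    simp only [Matrix.add_apply, Matrix.transpose_apply, Matrix.of_apply] at h
    simp only [h, Fin.ext_iff, Fin.val_zero, Fin.val_last]
  rw [Finset.sum_comm (f := fun i j => Q i j * f j i), ← Finset.sum_add_distrib]
  simp_rw [← Finset.sum_add_distrib, ← add_mul, hB]
  simp [ite_mul, add_mul, Finset.sum_add_distrib]
  ring

/-- equation (D.2): the first summation-by-parts identity used in the
discrete entropy analysis. -/
theorem sbp_jump_average_identity
    (N : ℕ) (Q : Matrix (Fin (N + 1)) (Fin (N + 1)) ℝ)
    (hSBP : Q + Q.transpose = Matrix.of fun i j : Fin (N + 1) =>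
      if i = j then
        (if (i : ℕ) = 0 then (-1 : ℝ) else 0) + (if (i : ℕ) = N then 1 else 0)
      else 0)
    (hrow : ∀ i, ∑ j, Q i j = 0) :
    ∀ a b : Fin (N + 1) → ℝ,
      ∑ i, ∑ j, Q i j * ((a i - a j) * ((b i + b j) / 2))
        = (∑ i, ∑ j, Q i j * (a i * b j))
          - (a (Fin.last N) * b (Fin.last N) - a 0 * b 0) := by
  intro a b
  have hrow0 : ∑ i, ∑ j, Q i j * (a i * b i) = 0 := by
    simp_rw [← Finset.sum_mul, hrow, zero_mul, Finset.sum_const_zero]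
  have hmixed := sbp_boundary_formula N Q hSBP fun i j => a i * b j
  have hcol := sbp_boundary_formula N Q hSBP fun i _ => a i * b i
  have hexp : ∑ i, ∑ j, Q i j * ((a i - a j) * ((b i + b j) / 2))
      = ((∑ i, ∑ j, Q i j * (a i * b i)) + (∑ i, ∑ j, Q i j * (a i * b j))
        - (∑ i, ∑ j, Q i j * (a j * b i)) - ∑ i, ∑ j, Q i j * (a j * b j)) / 2 := by
    simp_rw [← Finset.sum_add_distrib, ← Finset.sum_sub_distrib, Finset.sum_div]
    refine Finset.sum_congr rfl fun i _ => Finset.sum_congr rfl fun j _ => ?_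
    ring
  linarith
end

section
/- Let N ∈ ℕ and let Q be a real (N+1)×(N+1) matrix (indices 0,…,N) satisfying the SBP property Q + Qᵀ = B, where B = diag(−1,0,…,0,1). Then for all nodal values a, b, c : {0,…,N} → ℝ: ∑_{i,j=0}^{N} Q_{ij} (a_i − a_j) · ½(b_i + b_j) · ½(c_i + c_j) = ∑_{i,j=0}^{N} 2 Q_{ij} a_i · ½(b_i + b_j) · ½(c_i + c_j) − (a_N b_N c_N − a_0 b_0 c_0). -/
/-!
Since `(a i - a j) - 2 * a i = -(a i + a j)`, the claim says that `∑ Q i j (a i + a j) S i j`, with the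
symmetric weight `S i j = (b i + b j) / 2 * ((c i + c j) / 2)`, is the boundary term. Exchanging
`i` and `j` in the `a j` part turns that sum into `∑ (Q + Qᵀ) i j a i S i j`, where `Q + Qᵀ`
is supported on the two diagonal boundary entries.
-/

/-- equation (D.3): the second summation-by-parts identity used in the
discrete entropy analysis. -/
theorem sbp_jump_double_average_identity
    (N : ℕ) (Q : Matrix (Fin (N + 1)) (Fin (N + 1)) ℝ)
    (hSBP : Q + Q.transpose = Matrix.of fun i j : Fin (N + 1) =>
      if i = j then
        (if (i : ℕ) = 0 then (-1 : ℝ) else 0) + (if (i : ℕ) = N then 1 else 0)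
      else 0) :
    ∀ a b c : Fin (N + 1) → ℝ,
      ∑ i, ∑ j, Q i j * ((a i - a j) * ((b i + b j) / 2) * ((c i + c j) / 2))
        = (∑ i, ∑ j, 2 * Q i j * (a i * ((b i + b j) / 2) * ((c i + c j) / 2)))
          - (a (Fin.last N) * b (Fin.last N) * c (Fin.last N) - a 0 * b 0 * c 0) := by
  intro a b c
  -- The SBP property, contracted with `a i * S i j`, leaves only the boundary values.
  have hB : ∑ i, ∑ j, (Q i j + Q j i) * (a i * ((b i + b j) / 2) * ((c i + c j) / 2))
      = a (Fin.last N) * b (Fin.last N) * c (Fin.last N) - a 0 * b 0 * c 0 := by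
    have hQ : ∀ i j, Q i j + Q j i = if i = j then
        (if i = 0 then (-1 : ℝ) else 0) + (if i = Fin.last N then 1 else 0) else 0 := by
      intro i j
      have h := congrFun (congrFun hSBP i) j
      have h0 : (i : ℕ) = 0 ↔ i = 0 := by rw [Fin.ext_iff, Fin.val_zero]
      have hN : (i : ℕ) = N ↔ i = Fin.last N := by rw [Fin.ext_iff, Fin.val_last]
      simpa only [Matrix.add_apply, Matrix.transpose_apply, Matrix.of_apply, h0, hN] using h
    simp only [hQ, ite_mul, zero_mul, add_mul, Finset.sum_ite_eq, Finset.mem_univ, if_true,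
      Finset.sum_add_distrib, Finset.sum_ite_eq']
    ring
  have hswap : ∑ i, ∑ j, Q j i * (a i * ((b i + b j) / 2) * ((c i + c j) / 2))
      = ∑ i, ∑ j, Q i j * (a j * ((b i + b j) / 2) * ((c i + c j) / 2)) := by
    rw [Finset.sum_comm]
    refine Finset.sum_congr rfl fun i _ => Finset.sum_congr rfl fun j _ => ?_
    ring
  simp only [add_mul (Q _ _) (Q _ _), Finset.sum_add_distrib] at hB
  rw [← hB, hswap]
  simp only [← Finset.sum_add_distrib, ← Finset.sum_sub_distrib]
  refine Finset.sum_congr rfl fun i _ => Finset.sum_congr rfl fun j _ => ?_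
  ring
end

section
/- In the setting of the discrete identity of Appendix D.2 (nodal data W, U, F_l, S, F^s_l, ν, metric vectors Ja^α with the discrete metric identities; Q = diag(ω)·D with Q + Qᵀ = B = diag(−1,0,…,0,1) and zero row sums; symmetric two-point fluxes with diagonal consistency and the moving mesh entropy conditions; derivative projection operators 𝔻·G̃ and 𝔻·ν̃ as defined there), assume additionally: s : ℝ^p → ℝ is continuously differentiable; U_{ijk}, J_{ijk} : ℝ → ℝ^p, ℝ are differentiable nodal trajectories with W_{ijk}(t) := ∇s(U_{ijk}(t)) and S_{ijk}(t) := s(U_{ijk}(t)); numerical surface flux values ν̃*, G̃* and boundary trace values ν̃, G̃ are given at the boundary nodes of the six faces of {0,…,N}³; and for every node (i,j,k) and all t the nodal semi-discrete DGSEM equations hold: d/dt J_{ijk} = (𝔻·ν̃)_{ijk} + (1/(ω_iω_jω_k)) σ_{ijk}[ν̃* − ν̃] and d/dt (J_{ijk} U_{ijk}) = −(𝔻·G̃)_{ijk} − (1/(ω_iω_jω_k)) σ_{ijk}[G̃* − G̃], where for face data A the surface lift is σ_{ijk}[A] := ω_jω_k(δ_{iN} A^{1+}_{jk} − δ_{i0}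 A^{1−}_{jk}) + ω_iω_k(δ_{jN} A^{2+}_{ik} − δ_{j0} A^{2−}_{ik}) + ω_iω_j(δ_{kN} A^{3+}_{ij} − δ_{k0} A^{3−}_{ij}), and the boundary traces satisfy G̃^{α±} = ∑_l (Ja^α_l)(F_l − ν_l U) and ν̃^{α±} = ∑_l (Ja^α_l)ν_l at the corresponding boundary nodes. Then d/dt ∑_{i,j,k=0}^N ω_iω_jω_k S_{ijk} J_{ijk} equals the surface quadrature of (Ψ̃ − ν̃* Φ − Wᵀ G̃*) over the six faces, i.e. ∑_{j,k} ω_jω_k[(Ψ̃^1 − ν̃^{1,*}Φ − WᵀG̃^{1,*})_{Njk} − (…)_{0jk}] + ∑_{i,k} ω_iω_k[(…)_{iNk} − (…)_{i0k}] + ∑_{i,j} ω_iω_j[(…)_{ijN} − (…)_{ij0}], where Ψ̃^α := ∑_l (Ja^α_l)Ψ_l with Ψ_l := WᵀF_l − F^s_l and Φ := WᵀU − S. -/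
/-!
By the chain and product rules, `(S J)' = ⟪W, (J U)'⟫ - Φ J'` at every node, with `W = ∇s(U)` and
`Φ = ⟪W, U⟫ - S`; no division by `J` is needed. Inserting the nodal equations and multiplying by
the quadrature weights leaves, for each coordinate direction, a sum over the grid lines in that
direction of a one-dimensional quantity.

On one line, `Q + Qᵀ = B` and the symmetry of the two-point fluxes turn
`∑ Q i m (a i + a m) (⟪W i, G i m⟫ + Φ i (ν i + ν m) / 2)` into a boundary term plus
`∑ Q i m (a i + a m) / 2 * (⟪W i - W m, G i m⟫ + (Φ i - Φ m) (ν i + ν m) / 2)`. The entropy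
condition replaces the last bracketed factor by `Ψ i - Ψ m`, and the summation-by-parts property
together with the zero row sums reduces the result to boundary terms and
`∑ Q i m a m Ψ i` (`sbp_line_scalar`). The surface lift exchanges the interior traces in these
boundary terms for the numerical fluxes (`sbp_line_lift`). The remaining volume terms of the three
directions add up, at each node, to a combination of the discrete metric identities, hence vanish.
-/

open scoped RealInnerProductSpace

/-- Split form derivative projection of a vector-valued two-point flux `G` along one grid line;
`a i l` are the components of the metric vector at node `i`. -/
noncomputable def lineFlux {N : ℕ} {E : Type*} [NormedAddCommGroup E] [InnerProductSpace ℝ E]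
    (D : Matrix (Fin (N + 1)) (Fin (N + 1)) ℝ) (a : Fin (N + 1) → Fin 3 → ℝ)
    (G : Fin 3 → Fin (N + 1) → Fin (N + 1) → E) (i : Fin (N + 1)) : E :=
  ∑ m, ((2 * D i m) • ∑ l, (((a i l + a m l) / 2) • G l i m))

/-- Split form derivative projection of the mesh velocity `ν` along one grid line. -/
noncomputable def lineVelocity {N : ℕ}
    (D : Matrix (Fin (N + 1)) (Fin (N + 1)) ℝ) (a ν : Fin (N + 1) → Fin 3 → ℝ)
    (i : Fin (N + 1)) : ℝ :=
  ∑ m, (2 * D i m * ∑ l, (((ν i l + ν m l) / 2) * ((a i l + a m l) / 2)))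

/-- Signed lift, evaluated at node `i` of a grid line, of the endpoint values `P`
(at the last node) and `M` (at the first node), without quadrature weights. -/
noncomputable def lineLift {N : ℕ} {E : Type*} [NormedAddCommGroup E] [InnerProductSpace ℝ E]
    (P M : E) (i : Fin (N + 1)) : E :=
  (if i = Fin.last N then (1 : ℝ) else 0) • P - (if i = 0 then (1 : ℝ) else 0) • M

/-- The action of a summation-by-parts operator on double sums: transposing `Q` costs the boundary
term at the two endpoints. For `N = 0` the two endpoint
values coincide and cancel. -/
lemma sbp_transpose_sum {N : ℕ} {Q : Matrix (Fin (N + 1)) (Fin (N + 1)) ℝ}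
    (hSBP : Q + Q.transpose = Matrix.of fun i j : Fin (N + 1) =>
      if i = j then
        (if (i : ℕ) = 0 then (-1 : ℝ) else 0) + (if (i : ℕ) = N then 1 else 0)
      else 0)
    (f : Fin (N + 1) → Fin (N + 1) → ℝ) :
    ∑ i, ∑ m, Q i m * f i m
      = f (Fin.last N) (Fin.last N) - f 0 0 - ∑ i, ∑ m, Q i m * f m i := by
  have hQ : ∀ i m, Q i m = (if i = m then
      (if i = 0 then (-1 : ℝ) else 0) + (if i = Fin.last N then 1 else 0) else 0) - Q m i := by
    intro i m
    have h := congrFun (congrFun hSBP i) m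
    simp only [Matrix.add_apply, Matrix.transpose_apply, Matrix.of_apply] at h
    have h0 : ((i : ℕ) = 0) ↔ i = 0 := by rw [Fin.ext_iff]; rfl
    have hN : ((i : ℕ) = N) ↔ i = Fin.last N := by rw [Fin.ext_iff]; rfl
    simp only [h0, hN] at h
    linarith
  have h1 : ∑ i, ∑ m, Q i m * f i m = ∑ i, ∑ m, ((if i = m then
      (if i = 0 then (-1 : ℝ) else 0) + (if i = Fin.last N then 1 else 0) else 0) * f i m
        - Q m i * f i m) := by
    refine Finset.sum_congr rfl fun i _ => Finset.sum_congr rfl fun m _ => ?_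
    rw [hQ i m]; ring
  rw [h1]
  simp only [Finset.sum_sub_distrib]
  rw [Finset.sum_comm (f := fun i m => Q m i * f i m)]
  simp [ite_mul, add_mul, Finset.sum_add_distrib]
  ring

/-- One-dimensional entropy identity for a single metric component `a`: up to endpoint values, the
entropy-contracted split form equals the term `∑ Q i m a m Ψ i`, which the metric identities will
cancel. -/
lemma sbp_line_scalar {N : ℕ} {E : Type*} [NormedAddCommGroup E] [InnerProductSpace ℝ E]
    {Q : Matrix (Fin (N + 1)) (Fin (N + 1)) ℝ}
    (hSBP : Q + Q.transpose = Matrix.of fun i j : Fin (N + 1) =>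
      if i = j then
        (if (i : ℕ) = 0 then (-1 : ℝ) else 0) + (if (i : ℕ) = N then 1 else 0)
      else 0)
    (hrow : ∀ i, ∑ m, Q i m = 0)
    (W : Fin (N + 1) → E) (G : Fin (N + 1) → Fin (N + 1) → E)
    (a ν Φ Ψ : Fin (N + 1) → ℝ)
    (hsym : ∀ i m, G i m = G m i)
    (hec : ∀ i m, ⟪W i - W m, G i m⟫
      = (Ψ i - Ψ m) - ((ν i + ν m) / 2) * (Φ i - Φ m)) :
    ∑ i, ∑ m, Q i m * ((a i + a m) * (⟪W i, G i m⟫ + Φ i * ((ν i + ν m) / 2)))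
      = a (Fin.last N) * (⟪W (Fin.last N), G (Fin.last N) (Fin.last N)⟫
            + Φ (Fin.last N) * ν (Fin.last N) - Ψ (Fin.last N))
        - a 0 * (⟪W 0, G 0 0⟫ + Φ 0 * ν 0 - Ψ 0)
        + ∑ i, ∑ m, Q i m * (a m * Ψ i) := by
  have e1 := sbp_transpose_sum hSBP
    (fun i m => (a i + a m) * (⟪W i, G i m⟫ + Φ i * ((ν i + ν m) / 2)))
  have e2 := sbp_transpose_sum hSBP (fun i m => a m * Ψ i)
  have e3 := sbp_transpose_sum hSBP (fun i _ => a i * Ψ i)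
  have r : ∑ i, ∑ m, Q i m * (a i * Ψ i) = 0 := by
    simp [← Finset.sum_mul, hrow]
  have key : ∑ i, ∑ m, Q i m * ((a i + a m) * (⟪W i, G i m⟫ + Φ i * ((ν i + ν m) / 2)))
      - ∑ i, ∑ m, Q i m * ((a m + a i) * (⟪W m, G m i⟫ + Φ m * ((ν m + ν i) / 2)))
      = ∑ i, ∑ m, Q i m * (a i * Ψ i) + ∑ i, ∑ m, Q i m * (a m * Ψ i)
        - ∑ i, ∑ m, Q i m * (a i * Ψ m) - ∑ i, ∑ m, Q i m * (a m * Ψ m) := by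
    simp only [← Finset.sum_sub_distrib, ← Finset.sum_add_distrib]
    refine Finset.sum_congr rfl fun i _ => Finset.sum_congr rfl fun m _ => ?_
    have h := hec i m
    rw [inner_sub_left] at h
    rw [hsym m i]
    linear_combination Q i m * (a i + a m) * h
  beta_reduce at e1 e2 e3
  linarith

/-- One-dimensional entropy identity including the surface lift: summed along a grid line, the
entropy-contracted split form plus the lift produces the numerical surface terms and the volume
term that the metric identities cancel. -/
lemma sbp_line_lift {N : ℕ} {E : Type*} [NormedAddCommGroup E] [InnerProductSpace ℝ E]
    {ω : Fin (N + 1) → ℝ} {D Q : Matrix (Fin (N + 1)) (Fin (N + 1)) ℝ}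
    (hQ : ∀ i m, Q i m = ω i * D i m)
    (hSBP : Q + Q.transpose = Matrix.of fun i j : Fin (N + 1) =>
      if i = j then
        (if (i : ℕ) = 0 then (-1 : ℝ) else 0) + (if (i : ℕ) = N then 1 else 0)
      else 0)
    (hrow : ∀ i, ∑ m, Q i m = 0)
    (W : Fin (N + 1) → E) (G : Fin 3 → Fin (N + 1) → Fin (N + 1) → E)
    (a ν : Fin (N + 1) → Fin 3 → ℝ) (Φ : Fin (N + 1) → ℝ) (Ψ : Fin 3 → Fin (N + 1) → ℝ)
    (hsym : ∀ l i m, G l i m = G l m i)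
    (hec : ∀ l i m, ⟪W i - W m, G l i m⟫
      = (Ψ l i - Ψ l m) - ((ν i l + ν m l) / 2) * (Φ i - Φ m))
    (νt Ψt : Fin (N + 1) → ℝ) (Gt : Fin (N + 1) → E)
    (hνt : ∀ i, νt i = ∑ l, a i l * ν i l)
    (hGt : ∀ i, Gt i = ∑ l, a i l • G l i i)
    (hΨt : ∀ i, Ψt i = ∑ l, a i l * Ψ l i)
    (νP νM : ℝ) (GP GM : E) :
    ∑ i, (ω i * (⟪W i, lineFlux D a G i⟫ + Φ i * lineVelocity D a ν i)
        + (⟪W i, lineLift (GP - Gt (Fin.last N)) (GM - Gt 0) i⟫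
          + Φ i * lineLift (νP - νt (Fin.last N)) (νM - νt 0) i))
      = -((Ψt (Fin.last N) - νP * Φ (Fin.last N) - ⟪W (Fin.last N), GP⟫)
          - (Ψt 0 - νM * Φ 0 - ⟪W 0, GM⟫))
        + ∑ i, ω i * ∑ l, Ψ l i * ∑ m, D i m * a m l := by
  have hvol : ∑ i, ω i * (⟪W i, lineFlux D a G i⟫ + Φ i * lineVelocity D a ν i)
      = ∑ l, ∑ i, ∑ m, Q i m * ((a i l + a m l)
          * (⟪W i, G l i m⟫ + Φ i * ((ν i l + ν m l) / 2))) := by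
    rw [Finset.sum_comm]
    refine Finset.sum_congr rfl fun i _ => ?_
    rw [Finset.sum_comm]
    simp only [lineFlux, lineVelocity, inner_sum, real_inner_smul_right, Finset.mul_sum, ← Finset.sum_add_distrib]
    refine Finset.sum_congr rfl fun m _ => Finset.sum_congr rfl fun l _ => ?_
    rw [hQ]; ring
  have hmet : ∑ i, ω i * ∑ l, Ψ l i * ∑ m, D i m * a m l
      = ∑ l, ∑ i, ∑ m, Q i m * (a m l * Ψ l i) := by
    rw [Finset.sum_comm]
    refine Finset.sum_congr rfl fun i _ => ?_
    simp only [Finset.mul_sum]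
    refine Finset.sum_congr rfl fun l _ => Finset.sum_congr rfl fun m _ => ?_
    rw [hQ]; ring
  have hbd : ∀ i, ∑ l, a i l * (⟪W i, G l i i⟫ + Φ i * ν i l - Ψ l i)
      = ⟪W i, Gt i⟫ + Φ i * νt i - Ψt i := by
    intro i
    rw [hνt, hGt, hΨt]
    simp only [inner_sum, real_inner_smul_right, Finset.mul_sum, ← Finset.sum_add_distrib,
      ← Finset.sum_sub_distrib]
    refine Finset.sum_congr rfl fun l _ => ?_
    ring
  have hlift : ∑ i, (⟪W i, lineLift (GP - Gt (Fin.last N)) (GM - Gt 0) i⟫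
          + Φ i * lineLift (νP - νt (Fin.last N)) (νM - νt 0) i)
      = (⟪W (Fin.last N), GP⟫ - ⟪W (Fin.last N), Gt (Fin.last N)⟫
          + Φ (Fin.last N) * (νP - νt (Fin.last N)))
        - (⟪W 0, GM⟫ - ⟪W 0, Gt 0⟫ + Φ 0 * (νM - νt 0)) := by
    simp only [lineLift, smul_eq_mul, inner_sub_right, real_inner_smul_right, mul_sub, Finset.sum_add_distrib,
      Finset.sum_sub_distrib]
    simp
    ring
  rw [Finset.sum_add_distrib, hvol, hlift, hmet]
  rw [Finset.sum_congr rfl fun l _ => sbp_line_scalar hSBP hrow W (G l) (fun i => a i l)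
    (fun i => ν i l) Φ (Ψ l) (hsym l) (hec l)]
  rw [Finset.sum_add_distrib, Finset.sum_sub_distrib, hbd, hbd]
  ring

/-- Entropy chain rule at a node, written through the conserved quantity `J U`. -/
lemma hasDerivAt_entropy_mul {E : Type*} [NormedAddCommGroup E] [InnerProductSpace ℝ E]
    [CompleteSpace E] {s : E → ℝ} (hs : ContDiff ℝ 1 s) {U : ℝ → E} {J : ℝ → ℝ} {t J' : ℝ} {V : E}
    (hU : DifferentiableAt ℝ U t) (hJ : HasDerivAt J J' t)
    (hJU : HasDerivAt (fun τ => J τ • U τ) V t) :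
    HasDerivAt (fun τ => s (U τ) * J τ)
      (⟪gradient s (U t), V⟫ - (⟪gradient s (U t), U t⟫ - s (U t)) * J') t := by
  have hg : HasGradientAt s (gradient s (U t)) (U t) :=
    ((hs.differentiable (by norm_num)) (U t)).hasGradientAt
  have hsU : HasDerivAt (fun τ => s (U τ)) ⟪gradient s (U t), deriv U t⟫ t := by
    have h := hg.hasFDerivAt.comp_hasDerivAt t hU.hasDerivAt
    refine HasDerivAt.congr_deriv (f := fun τ => s (U τ)) h ?_
    simp
  have hV : V = J t • deriv U t + J' • U t := hJU.unique (hJ.smul hU.hasDerivAt)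
  refine (hsU.mul hJ).congr_deriv ?_
  rw [hV, inner_add_right, real_inner_smul_right, real_inner_smul_right]
  ring

/-- Theorem 3.3, single element form: the semi-discrete moving mesh
split form DGSEM with entropy conservative two-point fluxes satisfies
`d/dt ⟨S,J⟩_N = ∮ (Ψ̃ - ν̃* Φ - Wᵀ G̃*)` over the six faces of the element. -/
theorem dgsem_semidiscrete_entropy_conservation
    (N p : ℕ)
    (ω : Fin (N + 1) → ℝ) (D Q : Matrix (Fin (N + 1)) (Fin (N + 1)) ℝ)
    (hQ : ∀ i m, Q i m = ω i * D i m)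
    (hSBP : Q + Q.transpose = Matrix.of fun i j : Fin (N + 1) =>
      if i = j then
        (if (i : ℕ) = 0 then (-1 : ℝ) else 0) + (if (i : ℕ) = N then 1 else 0)
      else 0)
    (hrow : ∀ i, ∑ m, Q i m = 0)
    -- the Legendre-Gauss-Lobatto quadrature weights are positive
    (hω : ∀ i, 0 < ω i)
    -- the entropy function
    (s : EuclideanSpace ℝ (Fin p) → ℝ) (hs : ContDiff ℝ 1 s)
    -- nodal solution and metric trajectories
    (U : Fin (N + 1) → Fin (N + 1) → Fin (N + 1) → ℝ → EuclideanSpace ℝ (Fin p))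
    (J : Fin (N + 1) → Fin (N + 1) → Fin (N + 1) → ℝ → ℝ)
    (hU : ∀ i j k, Differentiable ℝ (U i j k))
    (hJdiff : ∀ i j k, Differentiable ℝ (J i j k))
    -- nodal entropy variables and nodal entropy
    (W : Fin (N + 1) → Fin (N + 1) → Fin (N + 1) → ℝ → EuclideanSpace ℝ (Fin p))
    (hW : ∀ i j k t, W i j k t = gradient s (U i j k t))
    (S : Fin (N + 1) → Fin (N + 1) → Fin (N + 1) → ℝ → ℝ)
    (hSdef : ∀ i j k t, S i j k t = s (U i j k t))
    -- remaining nodal data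
    (F : Fin 3 → Fin (N + 1) → Fin (N + 1) → Fin (N + 1) → ℝ → EuclideanSpace ℝ (Fin p))
    (Fs : Fin 3 → Fin (N + 1) → Fin (N + 1) → Fin (N + 1) → ℝ → ℝ)
    (ν : Fin (N + 1) → Fin (N + 1) → Fin (N + 1) → ℝ → (Fin 3 → ℝ))
    (Ja : Fin 3 → Fin (N + 1) → Fin (N + 1) → Fin (N + 1) → ℝ → (Fin 3 → ℝ))
    -- entropy potential and entropy flux potentials
    (Φ : Fin (N + 1) → Fin (N + 1) → Fin (N + 1) → ℝ → ℝ)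
    (Ψ : Fin 3 → Fin (N + 1) → Fin (N + 1) → Fin (N + 1) → ℝ → ℝ)
    (hΦ : ∀ i j k t, Φ i j k t = ⟪W i j k t, U i j k t⟫ - S i j k t)
    (hΨ : ∀ l i j k t, Ψ l i j k t = ⟪W i j k t, F l i j k t⟫ - Fs l i j k t)
    -- discrete metric identities
    (hMI : ∀ (β : Fin 3) (i j k : Fin (N + 1)) (t : ℝ),
      ∑ m, (D i m * Ja 0 m j k t β + D j m * Ja 1 i m k t β + D k m * Ja 2 i j m t β) = 0)
    -- two-point fluxes in the three coordinate directions
    (G1 G2 G3 : Fin 3 → Fin (N + 1) → Fin (N + 1) → Fin (N + 1) → Fin (N + 1) → ℝ →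
      EuclideanSpace ℝ (Fin p))
    (hsym1 : ∀ l i m j k t, G1 l i m j k t = G1 l m i j k t)
    (hsym2 : ∀ l i j m k t, G2 l i j m k t = G2 l i m j k t)
    (hsym3 : ∀ l i j k m t, G3 l i j k m t = G3 l i j m k t)
    (hcons1 : ∀ l i j k t, G1 l i i j k t = F l i j k t - ν i j k t l • U i j k t)
    (hcons2 : ∀ l i j k t, G2 l i j j k t = F l i j k t - ν i j k t l • U i j k t)
    (hcons3 : ∀ l i j k t, G3 l i j k k t = F l i j k t - ν i j k t l • U i j k t)
    -- moving mesh entropy conditions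
    (hec1 : ∀ l i m j k t,
      ⟪W i j k t - W m j k t, G1 l i m j k t⟫
        = (Ψ l i j k t - Ψ l m j k t)
          - ((ν i j k t l + ν m j k t l) / 2) * (Φ i j k t - Φ m j k t))
    (hec2 : ∀ l i j m k t,
      ⟪W i j k t - W i m k t, G2 l i j m k t⟫
        = (Ψ l i j k t - Ψ l i m k t)
          - ((ν i j k t l + ν i m k t l) / 2) * (Φ i j k t - Φ i m k t))
    (hec3 : ∀ l i j k m t,
      ⟪W i j k t - W i j m t, G3 l i j k m t⟫
        = (Ψ l i j k t - Ψ l i j m t)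
          - ((ν i j k t l + ν i j m t l) / 2) * (Φ i j k t - Φ i j m t))
    -- split form derivative projection operators
    (DG : Fin (N + 1) → Fin (N + 1) → Fin (N + 1) → ℝ → EuclideanSpace ℝ (Fin p))
    (hDG : ∀ i j k t, DG i j k t =
      ∑ m, ((2 * D i m) •
          ∑ l : Fin 3, (((Ja 0 i j k t l + Ja 0 m j k t l) / 2) • G1 l i m j k t))
      + ∑ m, ((2 * D j m) •
          ∑ l : Fin 3, (((Ja 1 i j k t l + Ja 1 i m k t l) / 2) • G2 l i j m k t))
      + ∑ m, ((2 * D k m) •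
          ∑ l : Fin 3, (((Ja 2 i j k t l + Ja 2 i j m t l) / 2) • G3 l i j k m t)))
    (Dν : Fin (N + 1) → Fin (N + 1) → Fin (N + 1) → ℝ → ℝ)
    (hDν : ∀ i j k t, Dν i j k t =
      ∑ m, (2 * D i m *
          ∑ l : Fin 3,
            (((ν i j k t l + ν m j k t l) / 2) * ((Ja 0 i j k t l + Ja 0 m j k t l) / 2)))
      + ∑ m, (2 * D j m *
          ∑ l : Fin 3,
            (((ν i j k t l + ν i m k t l) / 2) * ((Ja 1 i j k t l + Ja 1 i m k t l) / 2)))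
      + ∑ m, (2 * D k m *
          ∑ l : Fin 3,
            (((ν i j k t l + ν i j m t l) / 2) * ((Ja 2 i j k t l + Ja 2 i j m t l) / 2))))
    -- contravariant boundary traces
    (νt : Fin 3 → Fin (N + 1) → Fin (N + 1) → Fin (N + 1) → ℝ → ℝ)
    (hνt : ∀ α i j k t, νt α i j k t = ∑ l : Fin 3, Ja α i j k t l * ν i j k t l)
    (Gt : Fin 3 → Fin (N + 1) → Fin (N + 1) → Fin (N + 1) → ℝ → EuclideanSpace ℝ (Fin p))
    (hGt : ∀ α i j k t, Gt α i j k t =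
      ∑ l : Fin 3, Ja α i j k t l • (F l i j k t - ν i j k t l • U i j k t))
    (Ψt : Fin 3 → Fin (N + 1) → Fin (N + 1) → Fin (N + 1) → ℝ → ℝ)
    (hΨt : ∀ α i j k t, Ψt α i j k t = ∑ l : Fin 3, Ja α i j k t l * Ψ l i j k t)
    -- numerical surface fluxes on the plus/minus faces of each direction
    (νP νM : Fin 3 → Fin (N + 1) → Fin (N + 1) → ℝ → ℝ)
    (GP GM : Fin 3 → Fin (N + 1) → Fin (N + 1) → ℝ → EuclideanSpace ℝ (Fin p))
    -- surface lift operators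
    (liftν : Fin (N + 1) → Fin (N + 1) → Fin (N + 1) → ℝ → ℝ)
    (hliftν : ∀ i j k t, liftν i j k t =
      ω j * ω k *
        ((if i = Fin.last N then (1 : ℝ) else 0) * (νP 0 j k t - νt 0 (Fin.last N) j k t)
          - (if i = 0 then (1 : ℝ) else 0) * (νM 0 j k t - νt 0 0 j k t))
      + ω i * ω k *
        ((if j = Fin.last N then (1 : ℝ) else 0) * (νP 1 i k t - νt 1 i (Fin.last N) k t)
          - (if j = 0 then (1 : ℝ) else 0) * (νM 1 i k t - νt 1 i 0 k t))
      + ω i * ω j *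
        ((if k = Fin.last N then (1 : ℝ) else 0) * (νP 2 i j t - νt 2 i j (Fin.last N) t)
          - (if k = 0 then (1 : ℝ) else 0) * (νM 2 i j t - νt 2 i j 0 t)))
    (liftG : Fin (N + 1) → Fin (N + 1) → Fin (N + 1) → ℝ → EuclideanSpace ℝ (Fin p))
    (hliftG : ∀ i j k t, liftG i j k t =
      (ω j * ω k) •
        ((if i = Fin.last N then (1 : ℝ) else 0) • (GP 0 j k t - Gt 0 (Fin.last N) j k t)
          - (if i = 0 then (1 : ℝ) else 0) • (GM 0 j k t - Gt 0 0 j k t))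
      + (ω i * ω k) •
        ((if j = Fin.last N then (1 : ℝ) else 0) • (GP 1 i k t - Gt 1 i (Fin.last N) k t)
          - (if j = 0 then (1 : ℝ) else 0) • (GM 1 i k t - Gt 1 i 0 k t))
      + (ω i * ω j) •
        ((if k = Fin.last N then (1 : ℝ) else 0) • (GP 2 i j t - Gt 2 i j (Fin.last N) t)
          - (if k = 0 then (1 : ℝ) else 0) • (GM 2 i j t - Gt 2 i j 0 t)))
    -- the nodal semi-discrete moving mesh DGSEM equations
    (hDGCL : ∀ i j k t, HasDerivAt (J i j k)
      (Dν i j k t + (1 / (ω i * ω j * ω k)) * liftν i j k t) t)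
    (hDCL : ∀ i j k t, HasDerivAt (fun τ => J i j k τ • U i j k τ)
      (-(DG i j k t) - (1 / (ω i * ω j * ω k)) • liftG i j k t) t) :
    -- conclusion: semi-discrete entropy conservation
    ∀ t : ℝ,
      HasDerivAt (fun τ => ∑ i, ∑ j, ∑ k, ω i * ω j * ω k * (S i j k τ * J i j k τ))
        ((∑ j, ∑ k, ω j * ω k *
            ((Ψt 0 (Fin.last N) j k t - νP 0 j k t * Φ (Fin.last N) j k t
                - ⟪W (Fin.last N) j k t, GP 0 j k t⟫)
              - (Ψt 0 0 j k t - νM 0 j k t * Φ 0 j k t - ⟪W 0 j k t, GM 0 j k t⟫)))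
          + (∑ i, ∑ k, ω i * ω k *
              ((Ψt 1 i (Fin.last N) k t - νP 1 i k t * Φ i (Fin.last N) k t
                  - ⟪W i (Fin.last N) k t, GP 1 i k t⟫)
                - (Ψt 1 i 0 k t - νM 1 i k t * Φ i 0 k t - ⟪W i 0 k t, GM 1 i k t⟫)))
          + (∑ i, ∑ j, ω i * ω j *
              ((Ψt 2 i j (Fin.last N) t - νP 2 i j t * Φ i j (Fin.last N) t
                  - ⟪W i j (Fin.last N) t, GP 2 i j t⟫)
                - (Ψt 2 i j 0 t - νM 2 i j t * Φ i j 0 t - ⟪W i j 0 t, GM 2 i j t⟫)))) t := by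
  intro t
  -- Sums of the one-dimensional identity along the grid lines of each direction.
  have L1 := fun j k => sbp_line_lift hQ hSBP hrow (fun i => W i j k t)
    (fun l i m => G1 l i m j k t) (fun i => Ja 0 i j k t) (fun i => ν i j k t)
    (fun i => Φ i j k t) (fun l i => Ψ l i j k t)
    (fun l i m => hsym1 l i m j k t) (fun l i m => hec1 l i m j k t)
    (fun i => νt 0 i j k t) (fun i => Ψt 0 i j k t) (fun i => Gt 0 i j k t)
    (fun i => hνt 0 i j k t) (fun i => by simp only [hGt, hcons1])
    (fun i => hΨt 0 i j k t) (νP 0 j k t) (νM 0 j k t) (GP 0 j k t) (GM 0 j k t)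
  have L2 := fun i k => sbp_line_lift hQ hSBP hrow (fun j => W i j k t)
    (fun l j m => G2 l i j m k t) (fun j => Ja 1 i j k t) (fun j => ν i j k t)
    (fun j => Φ i j k t) (fun l j => Ψ l i j k t)
    (fun l j m => hsym2 l i j m k t) (fun l j m => hec2 l i j m k t)
    (fun j => νt 1 i j k t) (fun j => Ψt 1 i j k t) (fun j => Gt 1 i j k t)
    (fun j => hνt 1 i j k t) (fun j => by simp only [hGt, hcons2])
    (fun j => hΨt 1 i j k t) (νP 1 i k t) (νM 1 i k t) (GP 1 i k t) (GM 1 i k t)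
  have L3 := fun i j => sbp_line_lift hQ hSBP hrow (fun k => W i j k t)
    (fun l k m => G3 l i j k m t) (fun k => Ja 2 i j k t) (fun k => ν i j k t)
    (fun k => Φ i j k t) (fun l k => Ψ l i j k t)
    (fun l k m => hsym3 l i j k m t) (fun l k m => hec3 l i j k m t)
    (fun k => νt 2 i j k t) (fun k => Ψt 2 i j k t) (fun k => Gt 2 i j k t)
    (fun k => hνt 2 i j k t) (fun k => by simp only [hGt, hcons3])
    (fun k => hΨt 2 i j k t) (νP 2 i j t) (νM 2 i j t) (GP 2 i j t) (GM 2 i j t)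
  have hder : ∀ i j k, HasDerivAt (fun τ => ω i * ω j * ω k * (S i j k τ * J i j k τ))
      (ω i * ω j * ω k * (⟪W i j k t, -(DG i j k t)
          - (1 / (ω i * ω j * ω k)) • liftG i j k t⟫
        - Φ i j k t * (Dν i j k t + (1 / (ω i * ω j * ω k)) * liftν i j k t))) t := by
    intro i j k
    have h := (hasDerivAt_entropy_mul hs (hU i j k t) (hDGCL i j k t)
      (hDCL i j k t)).const_mul (ω i * ω j * ω k)
    simpa only [hΦ, hW, hSdef] using h
  have hsum : HasDerivAt
      (fun τ => ∑ i, ∑ j, ∑ k, ω i * ω j * ω k * (S i j k τ * J i j k τ))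
      (∑ i, ∑ j, ∑ k, ω i * ω j * ω k * (⟪W i j k t, -(DG i j k t)
          - (1 / (ω i * ω j * ω k)) • liftG i j k t⟫
        - Φ i j k t * (Dν i j k t + (1 / (ω i * ω j * ω k)) * liftν i j k t))) t :=
    HasDerivAt.fun_sum fun i _ => HasDerivAt.fun_sum fun j _ =>
      HasDerivAt.fun_sum fun k _ => hder i j k
  -- Directional contributions at a node, each without its transverse weights.
  obtain ⟨X1, hX1⟩ : ∃ X : Fin (N + 1) → Fin (N + 1) → Fin (N + 1) → ℝ, ∀ i j k, X i j k =
      ω i * (⟪W i j k t, lineFlux D (fun i => Ja 0 i j k t) (fun l i m => G1 l i m j k t) i⟫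
        + Φ i j k t * lineVelocity D (fun i => Ja 0 i j k t) (fun i => ν i j k t) i)
      + (⟪W i j k t, lineLift (GP 0 j k t - Gt 0 (Fin.last N) j k t)
            (GM 0 j k t - Gt 0 0 j k t) i⟫
        + Φ i j k t * lineLift (νP 0 j k t - νt 0 (Fin.last N) j k t)
            (νM 0 j k t - νt 0 0 j k t) i) := ⟨_, fun _ _ _ => rfl⟩
  obtain ⟨X2, hX2⟩ : ∃ X : Fin (N + 1) → Fin (N + 1) → Fin (N + 1) → ℝ, ∀ i j k, X i j k =
      ω j * (⟪W i j k t, lineFlux D (fun j => Ja 1 i j k t) (fun l j m => G2 l i j m k t) j⟫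
        + Φ i j k t * lineVelocity D (fun j => Ja 1 i j k t) (fun j => ν i j k t) j)
      + (⟪W i j k t, lineLift (GP 1 i k t - Gt 1 i (Fin.last N) k t)
            (GM 1 i k t - Gt 1 i 0 k t) j⟫
        + Φ i j k t * lineLift (νP 1 i k t - νt 1 i (Fin.last N) k t)
            (νM 1 i k t - νt 1 i 0 k t) j) := ⟨_, fun _ _ _ => rfl⟩
  obtain ⟨X3, hX3⟩ : ∃ X : Fin (N + 1) → Fin (N + 1) → Fin (N + 1) → ℝ, ∀ i j k, X i j k =
      ω k * (⟪W i j k t, lineFlux D (fun k => Ja 2 i j k t) (fun l k m => G3 l i j k m t) k⟫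
        + Φ i j k t * lineVelocity D (fun k => Ja 2 i j k t) (fun k => ν i j k t) k)
      + (⟪W i j k t, lineLift (GP 2 i j t - Gt 2 i j (Fin.last N) t)
            (GM 2 i j t - Gt 2 i j 0 t) k⟫
        + Φ i j k t * lineLift (νP 2 i j t - νt 2 i j (Fin.last N) t)
            (νM 2 i j t - νt 2 i j 0 t) k) := ⟨_, fun _ _ _ => rfl⟩
  have hnode : ∀ i j k, ω i * ω j * ω k * (⟪W i j k t, -(DG i j k t)
          - (1 / (ω i * ω j * ω k)) • liftG i j k t⟫
        - Φ i j k t * (Dν i j k t + (1 / (ω i * ω j * ω k)) * liftν i j k t))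
      = -(ω j * ω k * X1 i j k + ω i * ω k * X2 i j k + ω i * ω j * X3 i j k) := by
    intro i j k
    have hG : DG i j k t
        = lineFlux D (fun i => Ja 0 i j k t) (fun l i m => G1 l i m j k t) i
        + lineFlux D (fun j => Ja 1 i j k t) (fun l j m => G2 l i j m k t) j
        + lineFlux D (fun k => Ja 2 i j k t) (fun l k m => G3 l i j k m t) k := hDG i j k t
    have hv : Dν i j k t
        = lineVelocity D (fun i => Ja 0 i j k t) (fun i => ν i j k t) i
        + lineVelocity D (fun j => Ja 1 i j k t) (fun j => ν i j k t) j
        + lineVelocity D (fun k => Ja 2 i j k t) (fun k => ν i j k t) k := hDν i j k t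
    have hlG : liftG i j k t
        = (ω j * ω k) • lineLift (GP 0 j k t - Gt 0 (Fin.last N) j k t)
            (GM 0 j k t - Gt 0 0 j k t) i
        + (ω i * ω k) • lineLift (GP 1 i k t - Gt 1 i (Fin.last N) k t)
            (GM 1 i k t - Gt 1 i 0 k t) j
        + (ω i * ω j) • lineLift (GP 2 i j t - Gt 2 i j (Fin.last N) t)
            (GM 2 i j t - Gt 2 i j 0 t) k := hliftG i j k t
    have hlv : liftν i j k t
        = ω j * ω k * lineLift (νP 0 j k t - νt 0 (Fin.last N) j k t)
            (νM 0 j k t - νt 0 0 j k t) i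
        + ω i * ω k * lineLift (νP 1 i k t - νt 1 i (Fin.last N) k t)
            (νM 1 i k t - νt 1 i 0 k t) j
        + ω i * ω j * lineLift (νP 2 i j t - νt 2 i j (Fin.last N) t)
            (νM 2 i j t - νt 2 i j 0 t) k := hliftν i j k t
    have hi := (hω i).ne'
    have hj := (hω j).ne'
    have hk := (hω k).ne'
    simp only [hX1, hX2, hX3]
    rw [hG, hv, hlG, hlv]
    simp only [inner_sub_right, inner_neg_right, inner_add_right, real_inner_smul_right]
    field_simp
    ring
  have S1 : ∑ i, ∑ j, ∑ k, ω j * ω k * X1 i j k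
      = ∑ j, ∑ k, ω j * ω k * ∑ i, X1 i j k := by
    rw [Finset.sum_comm]
    refine Finset.sum_congr rfl fun j _ => ?_
    rw [Finset.sum_comm]
    simp only [Finset.mul_sum]
  have S2 : ∑ i, ∑ j, ∑ k, ω i * ω k * X2 i j k
      = ∑ i, ∑ k, ω i * ω k * ∑ j, X2 i j k := by
    refine Finset.sum_congr rfl fun i _ => ?_
    rw [Finset.sum_comm]
    simp only [Finset.mul_sum]
  have S3 : ∑ i, ∑ j, ∑ k, ω i * ω j * X3 i j k
      = ∑ i, ∑ j, ω i * ω j * ∑ k, X3 i j k := by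
    simp only [Finset.mul_sum]
  have M1 : ∑ j, ∑ k, ω j * ω k * ∑ i, ω i * ∑ l, Ψ l i j k t * ∑ m, D i m * Ja 0 m j k t l
      = ∑ i, ∑ j, ∑ k, ω i * ω j * ω k
          * ∑ l, Ψ l i j k t * ∑ m, D i m * Ja 0 m j k t l := by
    rw [Finset.sum_comm (s := Finset.univ (α := Fin (N + 1)))
      (f := fun i j => ∑ k, ω i * ω j * ω k
          * ∑ l, Ψ l i j k t * ∑ m, D i m * Ja 0 m j k t l)]
    refine Finset.sum_congr rfl fun j _ => ?_
    rw [Finset.sum_comm]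
    refine Finset.sum_congr rfl fun k _ => ?_
    rw [Finset.mul_sum]
    exact Finset.sum_congr rfl fun i _ => by ring
  have M2 : ∑ i, ∑ k, ω i * ω k * ∑ j, ω j * ∑ l, Ψ l i j k t * ∑ m, D j m * Ja 1 i m k t l
      = ∑ i, ∑ j, ∑ k, ω i * ω j * ω k
          * ∑ l, Ψ l i j k t * ∑ m, D j m * Ja 1 i m k t l := by
    refine Finset.sum_congr rfl fun i _ => ?_
    rw [Finset.sum_comm]
    refine Finset.sum_congr rfl fun k _ => ?_
    rw [Finset.mul_sum]
    exact Finset.sum_congr rfl fun j _ => by ring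
  have M3 : ∑ i, ∑ j, ω i * ω j * ∑ k, ω k * ∑ l, Ψ l i j k t * ∑ m, D k m * Ja 2 i j m t l
      = ∑ i, ∑ j, ∑ k, ω i * ω j * ω k
          * ∑ l, Ψ l i j k t * ∑ m, D k m * Ja 2 i j m t l := by
    refine Finset.sum_congr rfl fun i _ => Finset.sum_congr rfl fun j _ => ?_
    rw [Finset.mul_sum]
    exact Finset.sum_congr rfl fun k _ => by ring
  -- At each node the volume terms left over from the three directions cancel.
  have hM : (∑ i, ∑ j, ∑ k, ω i * ω j * ω k
          * ∑ l, Ψ l i j k t * ∑ m, D i m * Ja 0 m j k t l)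
      + (∑ i, ∑ j, ∑ k, ω i * ω j * ω k
          * ∑ l, Ψ l i j k t * ∑ m, D j m * Ja 1 i m k t l)
      + (∑ i, ∑ j, ∑ k, ω i * ω j * ω k
          * ∑ l, Ψ l i j k t * ∑ m, D k m * Ja 2 i j m t l) = 0 := by
    simp only [← Finset.sum_add_distrib, ← mul_add, hMI, mul_zero, Finset.sum_const_zero]
  refine hsum.congr_deriv ?_
  simp only [hnode, Finset.sum_neg_distrib, Finset.sum_add_distrib]
  rw [S1, S2, S3]
  simp only [hX1, hX2, hX3, L1, L2, L3]
  simp only [mul_add, Finset.sum_add_distrib, mul_neg, Finset.sum_neg_distrib]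
  rw [M1, M2, M3]
  linarith
end

section
/- Let N, p ∈ ℕ and let D be a real (N+1)×(N+1) matrix with ∑_{m=0}^N D_{im} = 0 for every i. For each node (i,j,k) ∈ {0,…,N}³ let metric vectors (Ja^1)_{ijk}, (Ja^2)_{ijk}, (Ja^3)_{ijk} ∈ ℝ³ be given satisfying the discrete metric identities: for every β ∈ {1,2,3} and every (i,j,k), ∑_{m=0}^N ( D_{im}(Ja^1_β)_{mjk} + D_{jm}(Ja^2_β)_{imk} + D_{km}(Ja^3_β)_{ijm} ) = 0. Let ν_{ijk} ∈ ℝ³ be nodal grid velocities, let C ∈ ℝ^p be a constant state, let F_1, F_2, F_3 : ℝ^p → ℝ^p be flux functions, and suppose the two-point fluxes satisfy the consistency condition at coincident states: for any two nodal grid velocities ν, ν′ and any l, G_l(ν, ν′, C, C) = F_l(C) − ½(ν_l + ν′_l) C. Then for every node (i,j,k): 2∑_{m=0}^N [ D_{im} ∑_{l=1}^3 G_l(ν_{ijk}, ν_{mjk}, C, C) · ½((Ja^1_l)_{ijk} + (Ja^1_l)_{mjk}) + D_{jm} ∑_l G_l(ν_{ijk}, ν_{imk}, C, C) · ½((Ja^2_l)_{ijk}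 + (Ja^2_l)_{imk}) + D_{km} ∑_l G_l(ν_{ijk}, ν_{ijm}, C, C) · ½((Ja^3_l)_{ijk} + (Ja^3_l)_{ijm}) ] = −(𝔻·ν̃)_{ijk} · C, where (𝔻·ν̃)_{ijk} := 2∑_{m=0}^N [ D_{im} ⟨ν⟩_{(i,m)jk}·⟨Ja^1⟩_{(i,m)jk} + D_{jm} ⟨ν⟩_{i(j,m)k}·⟨Ja^2⟩_{i(j,m)k} + D_{km} ⟨ν⟩_{ij(k,m)}·⟨Ja^3⟩_{ij(k,m)} ] with ⟨·⟩ the arithmetic mean of the two nodal values. -/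
/-! Substituting the consistency condition, every two-point flux at the constant state splits into
`F l C`, independent of the nodes, and a grid-velocity part. The velocity part is, term by term,
the discrete divergence `Dν` times `-C`. In the remaining part `F l C` factors out of the sum over
the nodes, and its coefficient is an averaged metric sum. That sum vanishes
(`averaged_metric_sum_eq_zero`): half of it is a nodal value times a row sum of `D`, the other half
is the discrete metric identity. -/

/-- The averaged metric sums vanish at every node. -/
theorem averaged_metric_sum_eq_zero
    {N : ℕ} (D : Matrix (Fin (N + 1)) (Fin (N + 1)) ℝ)
    (hrow : ∀ i, ∑ m, D i m = 0)
    (Ja : Fin 3 → Fin (N + 1) → Fin (N + 1) → Fin (N + 1) → (Fin 3 → ℝ))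
    (hMI : ∀ (β : Fin 3) (i j k : Fin (N + 1)),
      ∑ m, (D i m * Ja 0 m j k β + D j m * Ja 1 i m k β + D k m * Ja 2 i j m β) = 0)
    (β : Fin 3) (i j k : Fin (N + 1)) :
    2 * ∑ m, (D i m * ((Ja 0 i j k β + Ja 0 m j k β) / 2)
      + D j m * ((Ja 1 i j k β + Ja 1 i m k β) / 2)
      + D k m * ((Ja 2 i j k β + Ja 2 i j m β) / 2)) = 0 := by
  calc
    _ = (∑ m, D i m) * Ja 0 i j k β + (∑ m, D j m) * Ja 1 i j k β
        + (∑ m, D k m) * Ja 2 i j k β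
        + ∑ m, (D i m * Ja 0 m j k β + D j m * Ja 1 i m k β + D k m * Ja 2 i j m β) := by
      simp only [Finset.mul_sum, Finset.sum_mul, ← Finset.sum_add_distrib]
      exact Finset.sum_congr rfl fun m _ => by ring
    _ = 0 := by simp only [hrow, hMI, zero_mul, add_zero]

/-- core volume identity in Theorem 3.6: at a constant state `C`, the
split form derivative projection of the contravariant ALE flux reduces to minus the
discrete GCL operator applied to the contravariant grid velocity, times `C`. -/
theorem free_stream_volume_identity
    (N p : ℕ)
    (D : Matrix (Fin (N + 1)) (Fin (N + 1)) ℝ)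
    (hrow : ∀ i, ∑ m, D i m = 0)
    (Ja : Fin 3 → Fin (N + 1) → Fin (N + 1) → Fin (N + 1) → (Fin 3 → ℝ))
    (hMI : ∀ (β : Fin 3) (i j k : Fin (N + 1)),
      ∑ m, (D i m * Ja 0 m j k β + D j m * Ja 1 i m k β + D k m * Ja 2 i j m β) = 0)
    (ν : Fin (N + 1) → Fin (N + 1) → Fin (N + 1) → (Fin 3 → ℝ))
    (C : Fin p → ℝ)
    (F : Fin 3 → (Fin p → ℝ) → (Fin p → ℝ))
    (G : Fin 3 → (Fin 3 → ℝ) → (Fin 3 → ℝ) → (Fin p → ℝ) → (Fin p → ℝ) → (Fin p → ℝ))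
    (hcons : ∀ (l : Fin 3) (νa νb : Fin 3 → ℝ),
      G l νa νb C C = F l C - ((νa l + νb l) / 2) • C)
    (Dν : Fin (N + 1) → Fin (N + 1) → Fin (N + 1) → ℝ)
    (hDν : ∀ i j k, Dν i j k =
      2 * ∑ m,
        (D i m * ∑ l : Fin 3,
            ((ν i j k l + ν m j k l) / 2) * ((Ja 0 i j k l + Ja 0 m j k l) / 2)
          + D j m * ∑ l : Fin 3,
              ((ν i j k l + ν i m k l) / 2) * ((Ja 1 i j k l + Ja 1 i m k l) / 2)
          + D k m * ∑ l : Fin 3,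
              ((ν i j k l + ν i j m l) / 2) * ((Ja 2 i j k l + Ja 2 i j m l) / 2))) :
    ∀ i j k : Fin (N + 1),
      (2 : ℝ) • ∑ m,
          ((D i m) • ∑ l : Fin 3,
              (((Ja 0 i j k l + Ja 0 m j k l) / 2) • G l (ν i j k) (ν m j k) C C)
            + (D j m) • ∑ l : Fin 3,
                (((Ja 1 i j k l + Ja 1 i m k l) / 2) • G l (ν i j k) (ν i m k) C C)
            + (D k m) • ∑ l : Fin 3,
                (((Ja 2 i j k l + Ja 2 i j m l) / 2) • G l (ν i j k) (ν i j m) C C))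
        = (-(Dν i j k)) • C := by
  intro i j k
  have hA := fun l => averaged_metric_sum_eq_zero D hrow Ja hMI l i j k
  ext q
  -- Adding a combination of the vanishing averaged metric sums turns the claim into
  -- an identity between the summands over `m`.
  rw [← add_zero ((-(Dν i j k)) • C), Pi.add_apply]
  have hF : (0 : Fin p → ℝ) q = ∑ l : Fin 3, F l C q *
      (2 * ∑ m, (D i m * ((Ja 0 i j k l + Ja 0 m j k l) / 2)
        + D j m * ((Ja 1 i j k l + Ja 1 i m k l) / 2)
        + D k m * ((Ja 2 i j k l + Ja 2 i j m l) / 2))) := by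
    simp only [hA, mul_zero, Finset.sum_const_zero, Pi.zero_apply]
  rw [hF, hDν]
  simp only [hcons, Fin.sum_univ_three, Pi.smul_apply, Finset.sum_apply, Pi.add_apply,
    Pi.sub_apply, smul_eq_mul, Finset.mul_sum, Finset.sum_mul, ← Finset.sum_neg_distrib,
    ← Finset.sum_add_distrib]
  exact Finset.sum_congr rfl fun m _ => by ring
end
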